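/- Let B = diag(b₁,...,bₙ) and κ ∈ ℝ. Suppose X, P : ℝ → M_{n,r}(ℝ) are differentiable curves which at time t satisfy XᵀX = I_r, XᵀP + PᵀX = 0, and the equations X' = P - (1+2κ)XPᵀX, P' = (1+2κ)PXᵀP - B²X + 2BXXᵀBX + XΛ with Λ = XᵀB²X - 2XᵀBXXᵀBX - PᵀP. Then the SO(r)-momentum map Ψ = XᵀP - PᵀX satisfies dΨ/dt = 0 at time t; in particular the set {XᵀP = PᵀX = 0} is invariant under the flow. -/

import Mathlib

open Matrix

/-- Entrywise derivative of a matrix-valued curve. -/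
def HasMatDerivAt {m k : Type*} {E : Type*} [NormedAddCommGroup E] [NormedSpace ℝ E]
    (F : ℝ → Matrix m k E) (F' : Matrix m k E) (t : ℝ) : Prop :=
  ∀ i j, HasDerivAt (fun s => F s i j) (F' i j) t

/-!
Write the equations as `X' = P - c • X(PᵀX)`, `P' = c • P(XᵀP) + F + XΛ`, where the force of the
fourth-degree potential is `F = 2BX(XᵀBX) - B²X`. Preserving `XᵀP + PᵀX = 0` makes `Λ` equal to
`-PᵀP` minus the symmetric part of `XᵀF`, and `XᵀF` is symmetric because the potential is
`SO(r)`-invariant; so `Λ = -XᵀF - PᵀP`. Then `XᵀX = 1` gives `Xᵀ(F + XΛ) = -PᵀP`, which cancels the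
kinetic term `PᵀP` of `X'ᵀP`, and the two terms in `c` cancel each other. Hence already `XᵀP` is
conserved, and `Ψ` is the difference of `XᵀP` and its transpose.
-/

namespace HasMatDerivAt

section NormedSpace

variable {m k E : Type*} [NormedAddCommGroup E] [NormedSpace ℝ E]
  {F G : ℝ → Matrix m k E} {F' G' : Matrix m k E} {t : ℝ}

theorem transpose (hF : HasMatDerivAt F F' t) : HasMatDerivAt (fun s => (F s)ᵀ) F'ᵀ t :=
  fun i j => hF j i

theorem sub (hF : HasMatDerivAt F F' t) (hG : HasMatDerivAt G G' t) :
    HasMatDerivAt (fun s => F s - G s) (F' - G') t :=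
  fun i j => (hF i j).fun_sub (hG i j)

end NormedSpace

theorem mul {l m k A : Type*} [Fintype m] [NormedRing A] [NormedAlgebra ℝ A]
    {F : ℝ → Matrix l m A} {G : ℝ → Matrix m k A} {F' : Matrix l m A} {G' : Matrix m k A} {t : ℝ}
    (hF : HasMatDerivAt F F' t) (hG : HasMatDerivAt G G' t) :
    HasMatDerivAt (fun s => F s * G s) (F' * G t + F t * G') t := by
  intro i j
  simp only [Matrix.add_apply, Matrix.mul_apply, ← Finset.sum_add_distrib]
  exact HasDerivAt.fun_sum fun p _ => (hF i p).mul (hG p j)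

end HasMatDerivAt

section Conservation

variable {m k A : Type*} [Fintype m] [Fintype k] [DecidableEq k]

theorem transpose_mul_add_transpose_mul_eq_zero_of_force [CommRing A]
    {X P X' P' F : Matrix m k A} {Λ : Matrix k k A} {c : A}
    (hXX : Xᵀ * X = 1) (hΛ : Λ = -(Xᵀ * F) - Pᵀ * P)
    (hX' : X' = P - c • (X * (Pᵀ * X))) (hP' : P' = c • (P * (Xᵀ * P)) + F + X * Λ) :
    X'ᵀ * P + Xᵀ * P' = 0 := by
  have kinetic_eq : X'ᵀ * P = Pᵀ * P - c • (Xᵀ * P * (Xᵀ * P)) := by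
    simp only [hX', transpose_sub, transpose_smul, transpose_mul, transpose_transpose,
      Matrix.sub_mul, Matrix.smul_mul, Matrix.mul_assoc]
  have constrained_force_eq : Xᵀ * (F + X * Λ) = -(Pᵀ * P) := by
    rw [Matrix.mul_add, ← Matrix.mul_assoc, hXX, Matrix.one_mul, hΛ]
    abel
  rw [kinetic_eq, hP', add_assoc, Matrix.mul_add, constrained_force_eq, Matrix.mul_smul,
    ← Matrix.mul_assoc Xᵀ P]
  abel

variable [NormedCommRing A] [NormedAlgebra ℝ A] {X P : ℝ → Matrix m k A} {X' P' : Matrix m k A}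
  {Λ : Matrix k k A} {t : ℝ}

theorem hasMatDerivAt_transpose_mul_zero_of_force {F : Matrix m k A} {c : A}
    (hX : HasMatDerivAt X X' t) (hP : HasMatDerivAt P P' t) (hXX : (X t)ᵀ * X t = 1)
    (hΛ : Λ = -((X t)ᵀ * F) - (P t)ᵀ * P t)
    (hX' : X' = P t - c • (X t * ((P t)ᵀ * X t)))
    (hP' : P' = c • (P t * ((X t)ᵀ * P t)) + F + X t * Λ) :
    HasMatDerivAt (fun s => (X s)ᵀ * P s) 0 t := by
  rw [← transpose_mul_add_transpose_mul_eq_zero_of_force hXX hΛ hX' hP']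
  exact hX.transpose.mul hP

theorem fourth_degree_momentum_conserved_general {B : Matrix m m A} {κ : A}
    (hX : HasMatDerivAt X X' t) (hP : HasMatDerivAt P P' t) (hXX : (X t)ᵀ * X t = 1)
    (hΛ : Λ = (X t)ᵀ * (B * B) * X t
        - (2 : A) • ((X t)ᵀ * B * X t * ((X t)ᵀ * B * X t)) - (P t)ᵀ * P t)
    (hX' : X' = P t - (1 + 2 * κ) • (X t * ((P t)ᵀ * X t)))
    (hP' : P' = (1 + 2 * κ) • (P t * ((X t)ᵀ * P t)) - B * B * X t
        + (2 : A) • (B * X t * ((X t)ᵀ * B * X t)) + X t * Λ) :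
    HasMatDerivAt (fun s => (X s)ᵀ * P s) 0 t := by
  let F := (2 : A) • (B * X t * ((X t)ᵀ * B * X t)) - B * B * X t
  have multiplier_eq : Λ = -((X t)ᵀ * F) - (P t)ᵀ * P t := by
    simp only [hΛ, F, Matrix.mul_sub, Matrix.mul_smul, Matrix.mul_assoc, neg_sub]
  have momentum_eq : P' = (1 + 2 * κ) • (P t * ((X t)ᵀ * P t)) + F + X t * Λ := by
    rw [hP', sub_add_eq_add_sub, add_sub_assoc]
  exact hasMatDerivAt_transpose_mul_zero_of_force hX hP hXX multiplier_eq hX' momentum_eq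

end Conservation

/-- Along the flow of the fourth-degree potential system on
`V(n,r)`, the `SO(r)`-momentum map `Ψ = XᵀP - PᵀX` is conserved: `dΨ/dt = 0`. -/
theorem fourth_degree_momentum_conserved (n r : ℕ)
    (b : Fin n → ℝ) (B : Matrix (Fin n) (Fin n) ℝ) (hB : B = diagonal b) (κ : ℝ)
    (X P : ℝ → Matrix (Fin n) (Fin r) ℝ)
    (X' P' : Matrix (Fin n) (Fin r) ℝ) (t : ℝ)
    (hX : HasMatDerivAt X X' t) (hP : HasMatDerivAt P P' t)
    (hc1 : (X t)ᵀ * X t = 1)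
    (hc2 : (X t)ᵀ * P t + (P t)ᵀ * X t = 0)
    (Λ : Matrix (Fin r) (Fin r) ℝ)
    (hΛ : Λ = (X t)ᵀ * (B * B) * X t
        - (2 : ℝ) • ((X t)ᵀ * B * X t * ((X t)ᵀ * B * X t)) - (P t)ᵀ * P t)
    (heqX : X' = P t - (1 + 2 * κ) • (X t * ((P t)ᵀ * X t)))
    (heqP : P' = (1 + 2 * κ) • (P t * ((X t)ᵀ * P t)) - B * B * X t
        + (2 : ℝ) • (B * X t * ((X t)ᵀ * B * X t)) + X t * Λ) :
    HasMatDerivAt (fun s => (X s)ᵀ * P s - (P s)ᵀ * X s) 0 t := by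
  have conserved := fourth_degree_momentum_conserved_general hX hP hc1 hΛ heqX heqP
  simpa using conserved.sub conserved.transpose
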